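/- arXiv:1703.03181 — 2 statements merged into one kernel-verified Lean document; each statement's English description precedes it below -/
import Mathlib

section
/- Let φ : X → ℝ be a lower semicontinuous function and let z ∈ X. Then sup{ ψ(z) : ψ is S-subharmonic on X and continuous on X, ψ ≤ φ } = sup{ ψ(z) : ψ is S-subharmonic on X, ψ ≤ φ } = inf{ ∫_X φ dμ : μ ∈ J_z(S) }. -/
open MeasureTheory Topology Filter
open scoped ENNReal

/-- The nonnegative part of an extended real number, as an element of `ℝ≥0∞`. -/
noncomputable def erealToENNReal (a : EReal) : ℝ≥0∞ :=
  if a = ⊤ then ⊤ else ENNReal.ofReal a.toReal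

/-- The (upper) integral of a function with values in `[-∞, ∞]`, defined as the
difference of the lower integrals of its positive and negative parts. -/
noncomputable def erealIntegral {α : Type*} [MeasurableSpace α]
    (μ : Measure α) (u : α → EReal) : EReal :=
  ((∫⁻ x, erealToENNReal (u x) ∂μ : ℝ≥0∞) : EReal) -
    ((∫⁻ x, erealToENNReal (-(u x)) ∂μ : ℝ≥0∞) : EReal)

/-- `μ` is a Jensen measure with barycenter `z` with respect to the family `S` of
(continuous real-valued) functions: a Borel probability measure such that
`u z ≤ ∫ u dμ` for every `u ∈ S`. -/
def IsJensenMeasure {α : Type*} [MeasurableSpace α]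
    (S : Set (α → ℝ)) (z : α) (μ : Measure α) : Prop :=
  IsProbabilityMeasure μ ∧ ∀ u ∈ S, u z ≤ ∫ x, u x ∂μ

/-- A function `u : α → [-∞, ∞)` is `S`-subharmonic if it is upper semicontinuous
and satisfies `u z ≤ ∫ u dμ` for every `z` and every Jensen measure `μ` with
barycenter `z` w.r.t. `S`. -/
def IsSSubharmonic {α : Type*} [TopologicalSpace α] [MeasurableSpace α]
    (S : Set (α → ℝ)) (u : α → EReal) : Prop :=
  UpperSemicontinuous u ∧ (∀ x, u x ≠ ⊤) ∧
    ∀ z : α, ∀ μ : Measure α, IsJensenMeasure S z μ → u z ≤ erealIntegral μ u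

/-!
Only the bound of the infimum by the first supremum is not immediate. Members of `S` are continuous
and `S`-subharmonic, so it is enough to find, for a real `a` exceeding `u z` for all `u ∈ S` with
`u ≤ φ`, a Jensen measure `μ` at `z` with `∫ φ dμ ≤ a`.

The functions `u - u z + (a - h)`, with `u ∈ S` and `h ≤ φ` continuous, form a convex set. If one of
them were negative, `u + (a - u z)` would be a member of `S` below `φ` with value `a` at `z`. So
Hahn–Banach separates this set from the open convex cone of negative functions, and by the
Riesz–Markov–Kakutani theorem the separating functional is, after normalisation, a regular
probability measure `μ`. Replacing `u` by `t • u` with `t → ∞` shows that `μ` is a Jensen measure,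
and `u = 0` gives `∫ h dμ ≤ a`.

To pass from continuous `h ≤ φ` to `φ`, one uses the Vitali–Carathéodory theorem: an integrable
`f ≤ φ` has an upper semicontinuous minorant `g < f` with almost the same integral, and a partition
of unity inserts a continuous function between `g` and the lower semicontinuous `φ`.
-/

section Integral

open scoped NNReal

variable {α : Type*} [MeasurableSpace α]

theorem erealIntegral_eq_lintegral_toENNReal_sub (μ : Measure α) (u : α → EReal) :
    erealIntegral μ u =
      ((∫⁻ x, (u x).toENNReal ∂μ : ℝ≥0∞) : EReal) - ((∫⁻ x, (-u x).toENNReal ∂μ : ℝ≥0∞) : EReal) :=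
  rfl

theorem erealIntegral_mono (μ : Measure α) : Monotone (erealIntegral μ) := by
  intro u v huv
  simp only [erealIntegral_eq_lintegral_toENNReal_sub]
  refine EReal.sub_le_sub (EReal.coe_ennreal_le_coe_ennreal_iff.2 ?_)
    (EReal.coe_ennreal_le_coe_ennreal_iff.2 ?_)
  · exact lintegral_mono fun x => EReal.toENNReal_le_toENNReal (huv x)
  · exact lintegral_mono fun x => EReal.toENNReal_le_toENNReal (EReal.neg_le_neg_iff.2 (huv x))

theorem erealIntegral_coe {μ : Measure α} {f : α → ℝ} (hf : Integrable f μ) :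
    erealIntegral μ (fun x => (f x : EReal)) = ((∫ x, f x ∂μ : ℝ) : EReal) := by
  have hneg : ∫⁻ x, ENNReal.ofReal (-f x) ∂μ ≠ ∞ := hf.neg.lintegral_lt_top.ne
  rw [integral_eq_lintegral_pos_part_sub_lintegral_neg_part hf, EReal.coe_sub,
    EReal.coe_ennreal_toReal hf.lintegral_lt_top.ne, EReal.coe_ennreal_toReal hneg,
    erealIntegral_eq_lintegral_toENNReal_sub]
  simp only [← EReal.coe_neg, EReal.real_coe_toENNReal]

theorem coe_sub_toReal_toENNReal_neg_le {y : EReal} (hy : y ≠ ⊥) {s : ℝ≥0}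
    (hs : (s : ℝ≥0∞) ≤ y.toENNReal) : (((s : ℝ) - (-y).toENNReal.toReal : ℝ) : EReal) ≤ y := by
  induction y with
  | bot => exact absurd rfl hy
  | top => exact le_top
  | coe r =>
    rw [← EReal.coe_neg, EReal.real_coe_toENNReal, ENNReal.toReal_ofReal', EReal.coe_le_coe_iff,
      sub_le_iff_le_add]
    rw [EReal.real_coe_toENNReal, ENNReal.ofReal, ENNReal.coe_le_coe] at hs
    have hs' : (s : ℝ) ≤ max r 0 := hs
    linarith [max_zero_sub_max_neg_zero_eq_self r]

theorem erealIntegral_le_of_forall_integral_le {μ : Measure α} [IsFiniteMeasure μ]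
    {φ : α → EReal} (hφ : Measurable φ) (hbot : ∀ x, φ x ≠ ⊥)
    (hneg : ∫⁻ x, (-φ x).toENNReal ∂μ ≠ ∞) {a : ℝ}
    (ha : ∀ f : α → ℝ, Integrable f μ → (∀ x, (f x : EReal) ≤ φ x) → ∫ x, f x ∂μ ≤ a) :
    erealIntegral μ φ ≤ a := by
  set N := ∫⁻ x, (-φ x).toENNReal ∂μ with hN
  have hmeas : Measurable fun x => (-φ x).toENNReal := hφ.neg.ereal_toENNReal
  have hnegint : Integrable (fun x => (-φ x).toENNReal.toReal) μ :=
    integrable_toReal_of_lintegral_ne_top hmeas.aemeasurable hneg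
  have hsint (s : SimpleFunc α ℝ≥0) : Integrable (fun x => (s x : ℝ)) μ :=
    (s.map ((↑) : ℝ≥0 → ℝ)).integrable_of_isFiniteMeasure
  -- The test functions are `s - φ⁻` with `s` a simple function below `φ⁺`.
  have hsimple (s : SimpleFunc α ℝ≥0) (hs : ∀ x, (s x : ℝ≥0∞) ≤ (φ x).toENNReal) :
      ∫ x, (s x : ℝ) ∂μ ≤ a + N.toReal := by
    have hle : ∫ x, ((s x : ℝ) - (-φ x).toENNReal.toReal) ∂μ ≤ a :=
      ha _ ((hsint s).sub hnegint) fun x => coe_sub_toReal_toENNReal_neg_le (hbot x) (hs x)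
    rwa [integral_sub (hsint s) hnegint, integral_toReal hmeas.aemeasurable (ae_lt_top hmeas hneg),
      ← hN, sub_le_iff_le_add] at hle
  have hnonneg : 0 ≤ a + N.toReal := by simpa using hsimple 0 fun x => by simp
  have hpos : ∫⁻ x, (φ x).toENNReal ∂μ ≤ ENNReal.ofReal (a + N.toReal) := by
    rw [lintegral_eq_nnreal]
    refine iSup₂_le fun s hs => ?_
    calc (s.map ((↑) : ℝ≥0 → ℝ≥0∞)).lintegral μ = ∫⁻ x, ENNReal.ofReal (s x) ∂μ := by
          simp [← SimpleFunc.lintegral_eq_lintegral]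
      _ = ENNReal.ofReal (∫ x, (s x : ℝ) ∂μ) :=
          (ofReal_integral_eq_lintegral_ofReal (hsint s) (ae_of_all _ fun x => (s x).2)).symm
      _ ≤ ENNReal.ofReal (a + N.toReal) := ENNReal.ofReal_le_ofReal (hsimple s hs)
  rw [erealIntegral_eq_lintegral_toENNReal_sub, ← hN]
  refine EReal.sub_le_of_le_add ((EReal.coe_ennreal_le_coe_ennreal_iff.2 hpos).trans_eq ?_)
  rw [EReal.coe_ennreal_ofReal, max_eq_left hnonneg, EReal.coe_add, EReal.coe_ennreal_toReal hneg]

end Integral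

section Separation

theorem nonpos_and_nonneg_of_forall_pos_mul_le {y s : ℝ} (h : ∀ t > 0, t * y ≤ s) :
    y ≤ 0 ∧ 0 ≤ s := by
  have hy : y ≤ 0 := by
    by_contra! hy
    have hlarge := h ((|s| + 1) / y) (by positivity)
    rw [div_mul_cancel₀ _ hy.ne'] at hlarge
    linarith [le_abs_self s]
  refine ⟨hy, ?_⟩
  by_contra! hs
  have hy' : y < 0 := by linarith [h 1 one_pos]
  have hhalf := h (2⁻¹ * (s / y)) (mul_pos (by norm_num) (div_pos_of_neg_of_neg hs hy'))
  rw [mul_assoc, div_mul_cancel₀ _ hy'.ne] at hhalf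
  linarith

variable {X : Type*} [TopologicalSpace X]

theorem convex_setOf_forall_neg : Convex ℝ {f : C(X, ℝ) | ∀ x, f x < 0} :=
  fun _ hf _ hg _ _ hp hq hpq x => convex_Iio (0 : ℝ) (hf x) (hg x) hp hq hpq

variable [CompactSpace X]

theorem isOpen_setOf_forall_neg : IsOpen {f : C(X, ℝ) | ∀ x, f x < 0} := by
  simpa [Set.MapsTo] using
    ContinuousMap.isOpen_setOfPred_mapsTo (X := X) isCompact_univ (isOpen_Iio (a := (0 : ℝ)))

theorem exists_positiveLinearMap_nonneg_on_convex {C : Set C(X, ℝ)} (hC : Convex ℝ C)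
    (hne : C.Nonempty) (hnonneg : ∀ f ∈ C, ∃ x, 0 ≤ f x) :
    ∃ L : C(X, ℝ) →ₚ[ℝ] ℝ, L 1 = 1 ∧ ∀ f ∈ C, 0 ≤ L f := by
  have hdisj : Disjoint {f : C(X, ℝ) | ∀ x, f x < 0} C :=
    Set.disjoint_left.2 fun f hneg hf => let ⟨x, hx⟩ := hnonneg f hf; (hneg x).not_ge hx
  obtain ⟨L, s, hLneg, hLC⟩ := geometric_hahn_banach_open convex_setOf_forall_neg
    isOpen_setOf_forall_neg hC hdisj
  have hcone : ∀ f : C(X, ℝ), (∀ x, f x < 0) → L f ≤ 0 ∧ 0 ≤ s := fun f hf =>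
    nonpos_and_nonneg_of_forall_pos_mul_le fun t ht => by
      simpa using (hLneg (t • f) fun x => mul_neg_of_pos_of_neg ht (hf x)).le
  have hs : 0 ≤ s := (hcone (-1) fun _ => by simp).2
  have hLpos : ∀ f : C(X, ℝ), 0 ≤ f → 0 ≤ L f := fun f hf => by
    refine (nonpos_and_nonneg_of_forall_pos_mul_le (y := -L 1) fun t ht => ?_).2
    have hneg : ∀ x, (-(f + t • 1)) x < 0 := fun x =>
      neg_neg_of_pos (add_pos_of_nonneg_of_pos (hf x) (by simpa using ht))
    have hle := (hcone _ hneg).1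
    rw [map_neg, map_add, map_smul, smul_eq_mul] at hle
    linarith
  have hL1 : 0 < L 1 := by
    obtain ⟨c, hc⟩ := hne
    have hle : L c ≤ ‖c‖ * L 1 := by
      have := hLpos (‖c‖ • 1 - c) fun x => by simpa using c.apply_le_norm x
      simpa using this
    have hlt : -L 1 < ‖c‖ * L 1 :=
      calc -L 1 = L (-1) := (map_neg L 1).symm
        _ < s := hLneg (-1) fun _ => by simp
        _ ≤ L c := hLC c hc
        _ ≤ ‖c‖ * L 1 := hle
    refine (hLpos 1 zero_le_one).lt_of_ne fun hzero => ?_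
    simp [← hzero] at hlt
  refine ⟨.mk₀ ((L 1)⁻¹ • L.toLinearMap) fun f hf => ?_, ?_, fun f hf => ?_⟩
  · exact mul_nonneg (inv_nonneg.2 hL1.le) (hLpos f hf)
  · exact inv_mul_cancel₀ hL1.ne'
  · exact mul_nonneg (inv_nonneg.2 hL1.le) (hs.trans (hLC f hf))

variable [T2Space X] [MeasurableSpace X] [BorelSpace X]

theorem exists_regular_probabilityMeasure_integral_eq (L : C(X, ℝ) →ₚ[ℝ] ℝ) (hL : L 1 = 1) :
    ∃ μ : Measure X, IsProbabilityMeasure μ ∧ μ.Regular ∧ ∀ f : C(X, ℝ), ∫ x, f x ∂μ = L f := by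
  let Λ : CompactlySupportedContinuousMap X ℝ →ₚ[ℝ] ℝ :=
    { toFun f := L f.toContinuousMap
      map_add' f g := map_add L f.toContinuousMap g.toContinuousMap
      map_smul' c f := map_smul L c f.toContinuousMap
      monotone' _ _ hfg := OrderHomClass.mono L hfg }
  have hint : ∀ f : C(X, ℝ), ∫ x, f x ∂(RealRMK.rieszMeasure Λ) = L f := fun f =>
    RealRMK.integral_rieszMeasure Λ (CompactlySupportedContinuousMap.continuousMapEquiv f)
  refine ⟨RealRMK.rieszMeasure Λ, ⟨?_⟩, inferInstance, hint⟩
  have hone := hint 1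
  simp only [ContinuousMap.one_apply, integral_const, smul_eq_mul, mul_one, hL] at hone
  rwa [measureReal_def, ENNReal.toReal_eq_one_iff] at hone

end Separation

section Semicontinuity

variable {X : Type*} [TopologicalSpace X]

theorem exists_continuousMap_between [NormalSpace X] [ParacompactSpace X] {g φ : X → EReal}
    (hg : UpperSemicontinuous g) (hφ : LowerSemicontinuous φ) (hlt : ∀ x, g x < φ x) :
    ∃ h : C(X, ℝ), ∀ x, g x < h x ∧ (h x : EReal) < φ x := by
  refine exists_continuous_forall_mem_convex_of_local_const
    (t := fun x => {r : ℝ | g x < r ∧ (r : EReal) < φ x}) (fun x => ?_) fun x => ?_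
  · exact (Set.ordConnected_Ioo.preimage_mono EReal.coe_strictMono.monotone).convex
  · obtain ⟨c, hgc, hcφ⟩ := EReal.lt_iff_exists_real_btwn.1 (hlt x)
    exact ⟨c, (hg x c hgc).and (hφ x c hcφ)⟩

theorem exists_real_forall_le_of_lowerSemicontinuous [CompactSpace X] {φ : X → EReal}
    (hφ : LowerSemicontinuous φ) (hbot : ∀ x, φ x ≠ ⊥) : ∃ m : ℝ, ∀ x, (m : EReal) ≤ φ x := by
  cases isEmpty_or_nonempty X with
  | inl _ => exact ⟨0, isEmptyElim⟩
  | inr _ =>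
    obtain ⟨x₀, -, hmin⟩ := (hφ.lowerSemicontinuousOn Set.univ).exists_isMinOn Set.univ_nonempty
      isCompact_univ
    obtain ⟨m, -, hm⟩ := EReal.lt_iff_exists_real_btwn.1 (bot_lt_iff_ne_bot.2 (hbot x₀))
    exact ⟨m, fun x => hm.le.trans (hmin (Set.mem_univ x))⟩

variable [CompactSpace X] [MeasurableSpace X] [BorelSpace X]

theorem integrable_of_continuous {μ : Measure X} [IsFiniteMeasure μ] {f : X → ℝ}
    (hf : Continuous f) : Integrable f μ :=
  hf.integrable_of_hasCompactSupport (.of_compactSpace f)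

variable [T2Space X]

theorem integral_le_of_forall_continuousMap_integral_le {μ : Measure X} [IsFiniteMeasure μ]
    [μ.WeaklyRegular] {φ : X → EReal} (hφ : LowerSemicontinuous φ) {a : ℝ}
    (ha : ∀ h : C(X, ℝ), (∀ x, (h x : EReal) ≤ φ x) → ∫ x, h x ∂μ ≤ a)
    {f : X → ℝ} (hf : Integrable f μ) (hfφ : ∀ x, (f x : EReal) ≤ φ x) : ∫ x, f x ∂μ ≤ a := by
  refine le_of_forall_pos_le_add fun ε hε => ?_
  obtain ⟨g, hgf, hg, hgint, hgbot, hfg⟩ := exists_upperSemicontinuous_lt_integral_gt f hf hε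
  obtain ⟨h, hh⟩ := exists_continuousMap_between hg hφ fun x => (hgf x).trans_le (hfφ x)
  have hgh : ∫ x, (g x).toReal ∂μ ≤ ∫ x, h x ∂μ := by
    refine integral_mono_ae hgint (integrable_of_continuous h.continuous) ?_
    filter_upwards [hgbot] with x hx
    exact EReal.coe_le_coe_iff.1 ((EReal.coe_toReal_le hx.ne').trans (hh x).1.le)
  linarith [ha h fun x => (hh x).2.le]

theorem erealIntegral_le_of_forall_continuousMap_integral_le {μ : Measure X} [IsFiniteMeasure μ]
    [μ.WeaklyRegular] {φ : X → EReal} (hφ : LowerSemicontinuous φ) (hbot : ∀ x, φ x ≠ ⊥) {a : ℝ}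
    (ha : ∀ h : C(X, ℝ), (∀ x, (h x : EReal) ≤ φ x) → ∫ x, h x ∂μ ≤ a) :
    erealIntegral μ φ ≤ a := by
  obtain ⟨m, hm⟩ := exists_real_forall_le_of_lowerSemicontinuous hφ hbot
  have hneg : ∫⁻ x, (-φ x).toENNReal ∂μ ≤ ENNReal.ofReal (-m) * μ Set.univ :=
    calc ∫⁻ x, (-φ x).toENNReal ∂μ ≤ ∫⁻ _, ENNReal.ofReal (-m) ∂μ := lintegral_mono fun x =>
          EReal.toENNReal_le_toENNReal (EReal.neg_le_neg_iff.2 (hm x))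
      _ = ENNReal.ofReal (-m) * μ Set.univ := lintegral_const _
  refine erealIntegral_le_of_forall_integral_le hφ.measurable hbot
    (hneg.trans_lt (by finiteness)).ne fun f hf hfφ =>
      integral_le_of_forall_continuousMap_integral_le hφ ha hf hfφ

end Semicontinuity

section Edwards

variable {X : Type*} [TopologicalSpace X] {S : Set (X → ℝ)}

/-- The functions `u - u z + (a - h)` with `u ∈ S` and `h` a continuous minorant of `φ`. Jensen
measures `μ` at `z` with `∫ φ dμ ≤ a` arise as the probability measures that are nonnegative on
this set. -/
def edwardsSet (S : Set (X → ℝ)) (φ : X → EReal) (z : X) (a : ℝ) : Set C(X, ℝ) :=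
  {f | ∃ u ∈ S, ∃ h : C(X, ℝ), (∀ x, (h x : EReal) ≤ φ x) ∧
    ∀ x, f x = u x - u z + (a - h x)}

theorem convex_edwardsSet (hadd : ∀ u ∈ S, ∀ v ∈ S, u + v ∈ S)
    (hsmul : ∀ u ∈ S, ∀ t : ℝ, 0 ≤ t → t • u ∈ S) (φ : X → EReal) (z : X) (a : ℝ) :
    Convex ℝ (edwardsSet S φ z a) := by
  rintro f ⟨u, hu, h, hh, hf⟩ f' ⟨u', hu', h', hh', hf'⟩ p q hp hq hpq
  refine ⟨p • u + q • u', hadd _ (hsmul u hu p hp) _ (hsmul u' hu' q hq), p • h + q • h',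
    fun x => ?_, fun x => ?_⟩
  · have hconv : Convex ℝ ((↑) ⁻¹' Set.Iic (φ x) : Set ℝ) :=
      (Set.ordConnected_Iic.preimage_mono EReal.coe_strictMono.monotone).convex
    exact hconv (hh x) (hh' x) hp hq hpq
  · simp only [ContinuousMap.add_apply, ContinuousMap.smul_apply, Pi.add_apply, Pi.smul_apply,
      smul_eq_mul, hf x, hf' x]
    linear_combination a * hpq

theorem exists_nonneg_of_mem_edwardsSet (hconst : ∀ c : ℝ, (fun _ => c) ∈ S)
    (hadd : ∀ u ∈ S, ∀ v ∈ S, u + v ∈ S) {φ : X → EReal} {z : X} {a : ℝ}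
    (ha : ∀ u ∈ S, (∀ x, (u x : EReal) ≤ φ x) → u z < a)
    {f : C(X, ℝ)} (hf : f ∈ edwardsSet S φ z a) : ∃ x, 0 ≤ f x := by
  obtain ⟨u, hu, h, hh, hfx⟩ := hf
  by_contra! hneg
  refine absurd (ha _ (hadd u hu _ (hconst (a - u z))) fun x => ?_) (by simp)
  refine (EReal.coe_le_coe_iff.2 ?_).trans (hh x)
  have hlt := hfx x ▸ hneg x
  simp only [Pi.add_apply]
  linarith

variable [CompactSpace X] [MeasurableSpace X] [BorelSpace X]

theorem isSSubharmonic_coe_of_mem (hS : ∀ f ∈ S, Continuous f) {u : X → ℝ} (hu : u ∈ S) :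
    IsSSubharmonic S (fun x => (u x : EReal)) := by
  refine ⟨(continuous_coe_real_ereal.comp (hS u hu)).upperSemicontinuous,
    fun x => EReal.coe_ne_top _, fun w μ hμ => ?_⟩
  have := hμ.1
  rw [erealIntegral_coe (integrable_of_continuous (hS u hu))]
  exact EReal.coe_le_coe_iff.2 (hμ.2 u hu)

theorem isJensenMeasure_of_forall_mem_edwardsSet (hS : ∀ f ∈ S, Continuous f)
    (hconst : ∀ c : ℝ, (fun _ => c) ∈ S)
    (hsmul : ∀ u ∈ S, ∀ t : ℝ, 0 ≤ t → t • u ∈ S)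
    {φ : X → EReal} {h₀ : C(X, ℝ)} (hh₀ : ∀ x, (h₀ x : EReal) ≤ φ x) {z : X} {a : ℝ}
    {μ : Measure X} [IsProbabilityMeasure μ] (hμ : ∀ f ∈ edwardsSet S φ z a, 0 ≤ ∫ x, f x ∂μ) :
    IsJensenMeasure S z μ ∧ ∀ h : C(X, ℝ), (∀ x, (h x : EReal) ≤ φ x) → ∫ x, h x ∂μ ≤ a := by
  have hsplit : ∀ u ∈ S, ∀ h : C(X, ℝ), (∀ x, (h x : EReal) ≤ φ x) →
      0 ≤ (∫ x, u x ∂μ - u z) + (a - ∫ x, h x ∂μ) := by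
    intro u hu h hh
    have huint : Integrable u μ := integrable_of_continuous (hS u hu)
    have hhint : Integrable h μ := integrable_of_continuous h.continuous
    have huint' : Integrable (fun x => u x - u z) μ := huint.sub (integrable_const _)
    have hhint' : Integrable (fun x => a - h x) μ := (integrable_const _).sub hhint
    let f : C(X, ℝ) := ⟨fun x => u x - u z + (a - h x), by have := hS u hu; fun_prop⟩
    calc 0 ≤ ∫ x, (u x - u z + (a - h x)) ∂μ := hμ f ⟨u, hu, h, hh, fun _ => rfl⟩
      _ = (∫ x, u x ∂μ - u z) + (a - ∫ x, h x ∂μ) := by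
        rw [integral_add huint' hhint', integral_sub huint (integrable_const _),
          integral_sub (integrable_const _) hhint]
        simp
  refine ⟨⟨inferInstance, fun u hu => ?_⟩, fun h hh => ?_⟩
  · have hscale : ∀ t > 0, t * (u z - ∫ x, u x ∂μ) ≤ a - ∫ x, h₀ x ∂μ := fun t ht => by
      have hnonneg := hsplit _ (hsmul u hu t ht.le) h₀ hh₀
      simp only [Pi.smul_apply, smul_eq_mul, integral_const_mul] at hnonneg
      linarith
    exact sub_nonpos.1 (nonpos_and_nonneg_of_forall_pos_mul_le hscale).1
  · simpa using hsplit _ (hconst 0) h hh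

variable [T2Space X]

theorem exists_regular_isJensenMeasure_of_forall_lt (hS : ∀ f ∈ S, Continuous f)
    (hconst : ∀ c : ℝ, (fun _ => c) ∈ S)
    (hadd : ∀ u ∈ S, ∀ v ∈ S, u + v ∈ S)
    (hsmul : ∀ u ∈ S, ∀ t : ℝ, 0 ≤ t → t • u ∈ S)
    {φ : X → EReal} {h₀ : C(X, ℝ)} (hh₀ : ∀ x, (h₀ x : EReal) ≤ φ x) {z : X} {a : ℝ}
    (ha : ∀ u ∈ S, (∀ x, (u x : EReal) ≤ φ x) → u z < a) :
    ∃ μ : Measure X, μ.Regular ∧ IsJensenMeasure S z μ ∧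
      ∀ h : C(X, ℝ), (∀ x, (h x : EReal) ≤ φ x) → ∫ x, h x ∂μ ≤ a := by
  have hne : (edwardsSet S φ z a).Nonempty :=
    ⟨.const X a - h₀, _, hconst 0, h₀, hh₀, fun x => by simp⟩
  obtain ⟨L, hL1, hL⟩ := exists_positiveLinearMap_nonneg_on_convex
    (convex_edwardsSet hadd hsmul φ z a) hne
    fun f hf => exists_nonneg_of_mem_edwardsSet hconst hadd ha hf
  obtain ⟨μ, hμ, hreg, hint⟩ := exists_regular_probabilityMeasure_integral_eq L hL1
  exact ⟨μ, hreg, isJensenMeasure_of_forall_mem_edwardsSet hS hconst hsmul hh₀ fun f hf =>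
    (hL f hf).trans_eq (hint f).symm⟩

theorem exists_isJensenMeasure_erealIntegral_le (hS : ∀ f ∈ S, Continuous f)
    (hconst : ∀ c : ℝ, (fun _ => c) ∈ S)
    (hadd : ∀ u ∈ S, ∀ v ∈ S, u + v ∈ S)
    (hsmul : ∀ u ∈ S, ∀ t : ℝ, 0 ≤ t → t • u ∈ S)
    {φ : X → EReal} (hφ : LowerSemicontinuous φ) (hbot : ∀ x, φ x ≠ ⊥) {z : X} {a : ℝ}
    (ha : ∀ u ∈ S, (∀ x, (u x : EReal) ≤ φ x) → u z < a) :
    ∃ μ : Measure X, IsJensenMeasure S z μ ∧ erealIntegral μ φ ≤ a := by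
  obtain ⟨m, hm⟩ := exists_real_forall_le_of_lowerSemicontinuous hφ hbot
  obtain ⟨μ, _, hμ, hle⟩ := exists_regular_isJensenMeasure_of_forall_lt hS hconst hadd hsmul
    (h₀ := .const X m) hm ha
  have := hμ.1
  exact ⟨μ, hμ, erealIntegral_le_of_forall_continuousMap_integral_le hφ hbot hle⟩

theorem edwards_duality_subharmonic_general (hS : ∀ f ∈ S, Continuous f)
    (hconst : ∀ c : ℝ, (fun _ => c) ∈ S)
    (hadd : ∀ u ∈ S, ∀ v ∈ S, u + v ∈ S)
    (hsmul : ∀ u ∈ S, ∀ t : ℝ, 0 ≤ t → t • u ∈ S)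
    {φ : X → EReal} (hφ : LowerSemicontinuous φ) (hbot : ∀ x, φ x ≠ ⊥) (z : X) :
    sSup {y : EReal | ∃ ψ : X → EReal, IsSSubharmonic S ψ ∧ Continuous ψ ∧
        (∀ x, ψ x ≤ φ x) ∧ y = ψ z} =
      sSup {y : EReal | ∃ ψ : X → EReal, IsSSubharmonic S ψ ∧ (∀ x, ψ x ≤ φ x) ∧ y = ψ z} ∧
    sSup {y : EReal | ∃ ψ : X → EReal, IsSSubharmonic S ψ ∧ (∀ x, ψ x ≤ φ x) ∧ y = ψ z} =
      sInf {y : EReal | ∃ μ : Measure X, IsJensenMeasure S z μ ∧ y = erealIntegral μ φ} := by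
  set A := {y : EReal | ∃ ψ : X → EReal, IsSSubharmonic S ψ ∧ Continuous ψ ∧
    (∀ x, ψ x ≤ φ x) ∧ y = ψ z}
  set B := {y : EReal | ∃ ψ : X → EReal, IsSSubharmonic S ψ ∧ (∀ x, ψ x ≤ φ x) ∧ y = ψ z}
  set I := {y : EReal | ∃ μ : Measure X, IsJensenMeasure S z μ ∧ y = erealIntegral μ φ}
  have hAB : sSup A ≤ sSup B := sSup_le_sSup fun _ ⟨ψ, hψ, _, hle, hy⟩ => ⟨ψ, hψ, hle, hy⟩
  have hBI : sSup B ≤ sInf I := by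
    refine sSup_le ?_
    rintro _ ⟨ψ, hψ, hle, rfl⟩
    refine le_sInf ?_
    rintro _ ⟨μ, hμ, rfl⟩
    exact (hψ.2.2 z μ hμ).trans (erealIntegral_mono μ hle)
  have hIA : sInf I ≤ sSup A := by
    refine EReal.le_of_forall_lt_iff_le.1 fun a ha => ?_
    have hlt : ∀ u ∈ S, (∀ x, (u x : EReal) ≤ φ x) → u z < a := fun u hu hle => by
      have hmem : (u z : EReal) ∈ A := ⟨fun x => u x, isSSubharmonic_coe_of_mem hS hu,
        continuous_coe_real_ereal.comp (hS u hu), hle, rfl⟩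
      exact EReal.coe_lt_coe_iff.1 ((le_sSup hmem).trans_lt ha)
    obtain ⟨μ, hμ, hμa⟩ :=
      exists_isJensenMeasure_erealIntegral_le hS hconst hadd hsmul hφ hbot hlt
    exact sInf_le_of_le ⟨μ, hμ, rfl⟩ hμa
  exact ⟨le_antisymm hAB (hBI.trans hIA), le_antisymm hBI (hIA.trans hAB)⟩

end Edwards

/-- Edwards' duality for `S`-subharmonic envelopes: for lower semicontinuous
`φ : X → ℝ` and `z ∈ X`, the supremum of `ψ z` over continuous `S`-subharmonic
`ψ ≤ φ` equals the supremum over all `S`-subharmonic `ψ ≤ φ`, and both equal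
`inf { ∫ φ dμ : μ ∈ J_z(S) }`. -/
theorem edwards_duality_subharmonic {n : ℕ}
    (X : Set (Fin n → ℂ)) (hX : IsCompact X)
    (S : Set (↥X → ℝ)) (hS : ∀ f ∈ S, Continuous f)
    (hconst : ∀ c : ℝ, (fun _ => c) ∈ S)
    (hadd : ∀ u ∈ S, ∀ v ∈ S, u + v ∈ S)
    (hsmul : ∀ u ∈ S, ∀ t : ℝ, 0 ≤ t → t • u ∈ S)
    (hmax : ∀ u ∈ S, ∀ v ∈ S, (fun x => max (u x) (v x)) ∈ S)
    (φ : ↥X → ℝ) (hφ : LowerSemicontinuous φ) (z : ↥X) :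
    sSup {y : EReal | ∃ ψ : ↥X → EReal, IsSSubharmonic S ψ ∧ Continuous ψ ∧
        (∀ x, ψ x ≤ ((φ x : ℝ) : EReal)) ∧ y = ψ z} =
      sSup {y : EReal | ∃ ψ : ↥X → EReal, IsSSubharmonic S ψ ∧
        (∀ x, ψ x ≤ ((φ x : ℝ) : EReal)) ∧ y = ψ z} ∧
    sSup {y : EReal | ∃ ψ : ↥X → EReal, IsSSubharmonic S ψ ∧
        (∀ x, ψ x ≤ ((φ x : ℝ) : EReal)) ∧ y = ψ z} =
      sInf {y : EReal | ∃ μ : Measure ↥X, IsJensenMeasure S z μ ∧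
        y = erealIntegral μ (fun x => ((φ x : ℝ) : EReal))} := by
  have : CompactSpace X := isCompact_iff_compactSpace.1 hX
  exact edwards_duality_subharmonic_general hS hconst hadd hsmul
    (continuous_coe_real_ereal.comp_lowerSemicontinuous hφ EReal.coe_strictMono.monotone)
    (fun x => EReal.coe_ne_bot (φ x)) z
end

section
/- Let z₀ ∈ ∂Ω and suppose there exists a function u : Ω̄ → [-∞, ∞) that is S-subharmonic on Ω̄ with u ≤ 0 on Ω̄, u < 0 on Ω, and u(z₀) = 0 (a weak barrier at z₀). Then every μ ∈ J_{z₀}(S) satisfies μ(Ω) = 0, i.e., μ is supported on ∂Ω. -/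
/-!
For `u ≤ 0` the integral `∫ u dμ` is minus the lower integral of `-u`, so the Jensen inequality
`0 = u z₀ ≤ ∫ u dμ` forces `-u` to have integral zero. Upper semicontinuity makes `u` Borel, hence
`u = 0` almost everywhere, whereas `u < 0` at every point of `Ω`.
-/

open MeasureTheory Topology Filter
open scoped ENNReal

theorem erealToENNReal_eq_toENNReal : erealToENNReal = EReal.toENNReal := rfl

section

variable {X : Type*} [MeasurableSpace X] {μ : Measure X} {u : X → EReal}

theorem erealIntegral_of_ae_nonpos (hu : u ≤ᵐ[μ] 0) :
    erealIntegral μ u = -((∫⁻ x, (-u x).toENNReal ∂μ : ℝ≥0∞) : EReal) := by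
  have posPart_eq_zero : ∫⁻ x, (u x).toENNReal ∂μ = 0 :=
    lintegral_eq_zero_of_ae_eq_zero (hu.mono fun _ hx => EReal.toENNReal_of_nonpos hx)
  rw [erealIntegral, erealToENNReal_eq_toENNReal, posPart_eq_zero, EReal.coe_ennreal_zero,
    zero_sub]

theorem erealIntegral_nonneg_iff_of_ae_nonpos (hum : AEMeasurable u μ) (hu : u ≤ᵐ[μ] 0) :
    0 ≤ erealIntegral μ u ↔ u =ᵐ[μ] 0 := by
  have negPart_eq_zero_iff : ∫⁻ x, (-u x).toENNReal ∂μ = 0 ↔ 0 ≤ᵐ[μ] u :=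
    (lintegral_eq_zero_iff' hum.neg.ereal_toENNReal).trans <| eventually_congr <|
      .of_forall fun _ => EReal.toENNReal_eq_zero_iff.trans EReal.neg_le_zero
  calc
    0 ≤ erealIntegral μ u ↔ ∫⁻ x, (-u x).toENNReal ∂μ = 0 := by
      rw [erealIntegral_of_ae_nonpos hu, EReal.neg_nonneg, ← EReal.coe_ennreal_zero,
        EReal.coe_ennreal_le_coe_ennreal_iff, nonpos_iff_eq_zero]
    _ ↔ 0 ≤ᵐ[μ] u := negPart_eq_zero_iff
    _ ↔ u =ᵐ[μ] 0 := ⟨hu.antisymm, fun h => h.symm.le⟩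

variable [TopologicalSpace X] [OpensMeasurableSpace X] {S : Set (X → ℝ)} {z : X}

theorem IsSSubharmonic.ae_eq_zero_of_ae_nonpos (hu : IsSSubharmonic S u)
    (hμ : IsJensenMeasure S z μ) (hu0 : u ≤ᵐ[μ] 0) (huz : 0 ≤ u z) : u =ᵐ[μ] 0 := by
  obtain ⟨usc, -, le_integral⟩ := hu
  have integral_nonneg : 0 ≤ erealIntegral μ u := huz.trans (le_integral z μ hμ)
  exact (erealIntegral_nonneg_iff_of_ae_nonpos usc.measurable.aemeasurable hu0).mp integral_nonneg

theorem jensen_measure_supported_on_boundary_of_weak_barrier_general {A : Set X}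
    (hu : IsSSubharmonic S u) (hu0 : ∀ x, u x ≤ 0) (huneg : ∀ x ∈ A, u x < 0) (huz : u z = 0)
    (hμ : IsJensenMeasure S z μ) : μ A = 0 := by
  have ae_eq_zero : u =ᵐ[μ] 0 := hu.ae_eq_zero_of_ae_nonpos hμ (.of_forall hu0) huz.ge
  exact measure_mono_null (fun x hx => (huneg x hx).ne) (ae_iff.mp ae_eq_zero)

end

/-- If `∂Ω` has a weak barrier at `z₀` that is `S`-subharmonic on `Ω̄`, then every
Jensen measure with barycenter `z₀` is supported on `∂Ω`. -/
theorem jensen_measure_supported_on_boundary_of_weak_barrier {n : ℕ}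
    (Ω : Set (Fin n → ℂ)) (hΩo : IsOpen Ω) (hΩc : IsConnected Ω)
    (hΩb : Bornology.IsBounded Ω)
    (S : Set (↥(closure Ω) → ℝ)) (hS : ∀ f ∈ S, Continuous f)
    (z₀ : ↥(closure Ω)) (hz₀ : (z₀ : Fin n → ℂ) ∈ frontier Ω)
    (u : ↥(closure Ω) → EReal) (hu : IsSSubharmonic S u)
    (hu0 : ∀ x, u x ≤ 0)
    (huneg : ∀ x : ↥(closure Ω), (x : Fin n → ℂ) ∈ Ω → u x < 0)
    (huz₀ : u z₀ = 0) :
    ∀ μ : Measure ↥(closure Ω), IsJensenMeasure S z₀ μ →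
      μ {x : ↥(closure Ω) | (x : Fin n → ℂ) ∈ Ω} = 0 :=
  fun _ hμ =>
    jensen_measure_supported_on_boundary_of_weak_barrier_general hu hu0 huneg huz₀ hμ
end
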